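/- arXiv:2411.08497 — 4 statements merged into one kernel-verified Lean document; each statement's English description precedes it below -/
import Mathlib

section
/- Let X and Q be finite-dimensional real inner product spaces, let A : X × X → ℝ and B : Q × X → ℝ be bilinear forms, and let K = {ς ∈ X : B(q,ς) = 0 for all q ∈ Q} denote the kernel of B. Assume there is α⋆ > 0 such that A(ς,ς) ≥ α⋆‖ς‖² for all ς ∈ K (coercivity of A on the kernel), and there is β⋆ > 0 such that for every nonzero q ∈ Q there exists ς ∈ X with ς ≠ 0 and B(q,ς) ≥ β⋆‖q‖‖ς‖ (inf-sup condition). Then for every pair of linear functionals D : X → ℝ and f : Q → ℝ there exists a unique pair (x,p) ∈ X × Q such that A(x,ς) + B(p,ς) = D(ς) for all ς ∈ X and B(q,x) = f(q) for all q ∈ Q. -/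
/-! The problem is the linear equation `T (x, p) = (D, f)` for the operator
`T (x, p) = (A x + B p, B · x)` from `X × Q` to `X* × Q*`. In finite dimensions both sides have
the same dimension, so it suffices that `T` is injective. If `T (x, p) = 0`, then `x` lies in the
kernel of `B`, so testing the first equation with `x` gives `A x x = 0` and coercivity forces
`x = 0`; then `B p = 0`, and the inf-sup condition forces `p = 0`. -/

open RealInnerProductSpace

/-- Well-posedness of the abstract finite-dimensional saddle point problem:
coercivity of `A` on the kernel of `B` and the inf-sup condition for `B`
imply existence and uniqueness of the saddle point solution for any data. -/
theorem saddle_point_well_posed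
    {X Q : Type*}
    [NormedAddCommGroup X] [InnerProductSpace ℝ X] [FiniteDimensional ℝ X]
    [NormedAddCommGroup Q] [InnerProductSpace ℝ Q] [FiniteDimensional ℝ Q]
    (A : X →ₗ[ℝ] X →ₗ[ℝ] ℝ) (B : Q →ₗ[ℝ] X →ₗ[ℝ] ℝ)
    (αs : ℝ) (hαs : 0 < αs)
    (hcoer : ∀ ς : X, (∀ q : Q, B q ς = 0) → A ς ς ≥ αs * ‖ς‖ ^ 2)
    (βs : ℝ) (hβs : 0 < βs)
    (hinfsup : ∀ q : Q, q ≠ 0 → ∃ ς : X, ς ≠ 0 ∧ B q ς ≥ βs * ‖q‖ * ‖ς‖) :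
    ∀ (D : X →ₗ[ℝ] ℝ) (f : Q →ₗ[ℝ] ℝ),
      ∃! xp : X × Q,
        (∀ ς : X, A xp.1 ς + B xp.2 ς = D ς) ∧ (∀ q : Q, B q xp.1 = f q) := by
  intro D f
  let T : X × Q →ₗ[ℝ] (X →ₗ[ℝ] ℝ) × (Q →ₗ[ℝ] ℝ) :=
    (A.coprod B).prod (B.flip ∘ₗ LinearMap.fst ℝ X Q)
  have hT : ∀ (xp : X × Q) (D : X →ₗ[ℝ] ℝ) (f : Q →ₗ[ℝ] ℝ), T xp = (D, f) ↔
      (∀ ς : X, A xp.1 ς + B xp.2 ς = D ς) ∧ (∀ q : Q, B q xp.1 = f q) := by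
    intro xp D f
    simp [T, Prod.ext_iff, LinearMap.ext_iff]
  have hinj : Function.Injective T := by
    rw [injective_iff_map_eq_zero]
    rintro ⟨x, p⟩ h
    obtain ⟨h1, h2⟩ := (hT (x, p) 0 0).1 h
    simp only [LinearMap.zero_apply] at h1 h2
    have hx : x = 0 := by
      have hA : A x x = 0 := by simpa [h2 p] using h1 x
      have hc := hcoer x h2
      rw [hA] at hc
      by_contra hne
      have : 0 < αs * ‖x‖ ^ 2 := mul_pos hαs (pow_pos (norm_pos_iff.2 hne) 2)
      linarith
    have hp : p = 0 := by
      by_contra hne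
      obtain ⟨ς, hς, hB⟩ := hinfsup p hne
      have hB0 : B p ς = 0 := by simpa [hx] using h1 ς
      have : 0 < βs * ‖p‖ * ‖ς‖ :=
        mul_pos (mul_pos hβs (norm_pos_iff.2 hne)) (norm_pos_iff.2 hς)
      linarith
    rw [hx, hp, Prod.mk_zero_zero]
  have hdim : Module.finrank ℝ (X × Q) =
      Module.finrank ℝ ((X →ₗ[ℝ] ℝ) × (Q →ₗ[ℝ] ℝ)) := by
    simp [Module.finrank_prod]
  have hsurj : Function.Surjective T :=
    (LinearMap.injective_iff_surjective_of_finrank_eq_finrank hdim).1 hinj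
  obtain ⟨xp, hxp⟩ := hsurj (D, f)
  exact ⟨xp, (hT xp D f).1 hxp, fun y hy => hinj (((hT y D f).2 hy).trans hxp.symm)⟩
end

section
/- Let Y and U be real inner product spaces, let η > 0 and C_T > 0, let a : Y × Y → ℝ be a bilinear form with a(w,w) ≥ η‖w‖² for all w ∈ Y, and let T : Y → U be a linear map with ‖Tq‖ ≤ C_T‖q‖ for all q ∈ Y. Let m : Y × Y → ℝ be a bilinear form with m(w,w) ≥ 0 for all w ∈ Y, and let α > 0. If w ∈ Y and v ∈ U satisfy a(w,q) = ⟨v, Tq⟩ for all q ∈ Y, then m(w,w) + α‖v‖² ≥ (α/2)·min(1, η²/C_T²)·(‖w‖² + ‖v‖²). -/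
/-!
Testing the constraint with `q = w` and combining coercivity of `a`, Cauchy-Schwarz and the bound on
`T` gives `η‖w‖ ≤ CT‖v‖`. Hence `min 1 (η² / CT²)` times either of `‖w‖²`, `‖v‖²` is at most `‖v‖²`,
so half of `α‖v‖²` controls each of the two terms, and `m w w ≥ 0` is discarded.
-/

open RealInnerProductSpace

/-- Coercivity of the cost bilinear form on the discrete kernel of the
saddle point formulation of a Neumann boundary optimal control problem. -/
theorem cost_coercive_on_kernel
    {Y U : Type*}
    [NormedAddCommGroup Y] [InnerProductSpace ℝ Y]
    [NormedAddCommGroup U] [InnerProductSpace ℝ U]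
    (η CT : ℝ) (hη : 0 < η) (hCT : 0 < CT)
    (a : Y →ₗ[ℝ] Y →ₗ[ℝ] ℝ) (ha : ∀ w : Y, a w w ≥ η * ‖w‖ ^ 2)
    (T : Y →ₗ[ℝ] U) (hT : ∀ q : Y, ‖T q‖ ≤ CT * ‖q‖)
    (m : Y →ₗ[ℝ] Y →ₗ[ℝ] ℝ) (hm : ∀ w : Y, m w w ≥ 0)
    (α : ℝ) (hα : 0 < α)
    (w : Y) (v : U) (hwv : ∀ q : Y, a w q = ⟪v, T q⟫) :
    m w w + α * ‖v‖ ^ 2 ≥ α / 2 * min 1 (η ^ 2 / CT ^ 2) * (‖w‖ ^ 2 + ‖v‖ ^ 2) := by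
  -- Testing the constraint with `q = w` bounds the state by the control.
  have hstate : η * ‖w‖ ≤ CT * ‖v‖ := by
    have h : η * ‖w‖ ^ 2 ≤ ‖v‖ * (CT * ‖w‖) :=
      calc η * ‖w‖ ^ 2 ≤ a w w := ha w
        _ = ⟪v, T w⟫ := hwv w
        _ ≤ ‖v‖ * ‖T w‖ := real_inner_le_norm v (T w)
        _ ≤ ‖v‖ * (CT * ‖w‖) := by gcongr; exact hT w
    rcases (norm_nonneg w).eq_or_lt with h0 | h0
    · rw [← h0, mul_zero]; positivity
    · exact le_of_mul_le_mul_right (by linarith) h0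
  have hsq : η ^ 2 / CT ^ 2 * ‖w‖ ^ 2 ≤ ‖v‖ ^ 2 := by
    rw [div_mul_eq_mul_div, div_le_iff₀ (by positivity), ← mul_pow, mul_comm (‖v‖ ^ 2), ← mul_pow]
    gcongr
  have hw : min 1 (η ^ 2 / CT ^ 2) * ‖w‖ ^ 2 ≤ ‖v‖ ^ 2 :=
    (mul_le_mul_of_nonneg_right (min_le_right _ _) (by positivity)).trans hsq
  have hv : min 1 (η ^ 2 / CT ^ 2) * ‖v‖ ^ 2 ≤ ‖v‖ ^ 2 :=
    mul_le_of_le_one_left (by positivity) (min_le_left _ _)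
  calc α / 2 * min 1 (η ^ 2 / CT ^ 2) * (‖w‖ ^ 2 + ‖v‖ ^ 2)
      = α / 2 * (min 1 (η ^ 2 / CT ^ 2) * ‖w‖ ^ 2 + min 1 (η ^ 2 / CT ^ 2) * ‖v‖ ^ 2) := by ring
    _ ≤ α / 2 * (‖v‖ ^ 2 + ‖v‖ ^ 2) := by gcongr
    _ = α * ‖v‖ ^ 2 := by ring
    _ ≤ m w w + α * ‖v‖ ^ 2 := le_add_of_nonneg_left (hm w)
end

section
/- Let X and Q be finite-dimensional real inner product spaces, let A : X × X → ℝ be a symmetric bilinear form, let B : Q × X → ℝ be a bilinear form such that for every nonzero q ∈ Q there exists ς ∈ X with B(q,ς) ≠ 0, and let D : X → ℝ and f : Q → ℝ be linear functionals. Suppose x ∈ X satisfies B(q,x) = f(q) for all q ∈ Q and minimizes J(ς) = (1/2)A(ς,ς) − D(ς) over the set {ς ∈ X : B(q,ς) = f(q) for all q ∈ Q}. Then there exists p ∈ Q such that A(x,ς) + B(p,ς) = D(ς) for all ς ∈ X. -/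
/-!
The first variation of `J` at the minimizer `x` is the functional `A x - D`. Since `x + t v` is
admissible for every `t` when `v` is annihilated by all `B q`, this functional vanishes on the
kernel of `B.flip : X → Dual Q`. In finite dimensions the annihilator of that kernel is the range
of `B : Q → Dual X` (`LinearMap.dualAnnihilator_ker_eq_range_flip`), so `D - A x = B p` for some
`p`, the Lagrange multiplier.
-/

/-- Existence of the Lagrange multiplier: a constrained minimizer of the
quadratic functional `J(ς) = (1/2) A(ς,ς) − D(ς)` satisfies, together with
some `p`, the first saddle point equation, provided `B` is nondegenerate. -/
theorem minimizer_implies_saddle_point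
    {X Q : Type*}
    [NormedAddCommGroup X] [InnerProductSpace ℝ X] [FiniteDimensional ℝ X]
    [NormedAddCommGroup Q] [InnerProductSpace ℝ Q] [FiniteDimensional ℝ Q]
    (A : X →ₗ[ℝ] X →ₗ[ℝ] ℝ) (hsymm : ∀ x y : X, A x y = A y x)
    (B : Q →ₗ[ℝ] X →ₗ[ℝ] ℝ)
    (hB : ∀ q : Q, q ≠ 0 → ∃ ς : X, B q ς ≠ 0)
    (D : X →ₗ[ℝ] ℝ) (f : Q →ₗ[ℝ] ℝ)
    (x : X) (hx : ∀ q : Q, B q x = f q)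
    (hmin : ∀ ς : X, (∀ q : Q, B q ς = f q) →
      (1 / 2 : ℝ) * A x x - D x ≤ (1 / 2 : ℝ) * A ς ς - D ς) :
    ∃ p : Q, ∀ ς : X, A x ς + B p ς = D ς := by
  -- Stationarity along `ker B.flip`: the quadratic `t ↦ J(x + t v) - J(x)` is nonnegative and has
  -- no constant term, so its discriminant, the square of its linear coefficient, is nonpositive.
  have hstat : D - A x ∈ (LinearMap.ker B.flip).dualAnnihilator := by
    rw [Submodule.mem_dualAnnihilator]
    intro v hv
    have hBv : ∀ q : Q, B q v = 0 := fun q => by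
      simpa using LinearMap.congr_fun (LinearMap.mem_ker.mp hv) q
    have hquad : ∀ t : ℝ, 0 ≤ (1 / 2 * A v v) * (t * t) + (A x v - D v) * t + 0 := by
      intro t
      have h := hmin (x + t • v) (fun q => by simp [hBv q, hx q])
      simp only [map_add, map_smul, LinearMap.add_apply, LinearMap.smul_apply, smul_eq_mul,
        hsymm v x] at h
      linarith
    have hdisc := discrim_le_zero hquad
    rw [discrim] at hdisc
    have h0 : A x v - D v = 0 := by
      apply pow_eq_zero_iff two_ne_zero |>.mp
      nlinarith [sq_nonneg (A x v - D v)]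
    simp only [LinearMap.sub_apply]
    linarith
  rw [LinearMap.dualAnnihilator_ker_eq_range_flip, LinearMap.flip_flip] at hstat
  obtain ⟨p, hp⟩ := hstat
  exact ⟨p, fun ς => by rw [hp, LinearMap.sub_apply]; ring⟩
end

section
/- Let V be a real inner product space and V_h ⊆ V a linear subspace. Let a : V × V → ℝ be a bilinear form with |a(u,w)| ≤ M‖u‖‖w‖ for all u, w ∈ V (with M ≥ 0), and let a_h : V × V → ℝ be a bilinear form with a_h(w,w) ≥ η‖w‖² for all w ∈ V_h (with η > 0). Let F : V → ℝ and F_h : V → ℝ be linear, let u ∈ V satisfy a(u,q) = F(q) for all q ∈ V, and let u_h ∈ V_h satisfy a_h(u_h,q) = F_h(q) for all q ∈ V_h. Suppose v_h ∈ V_h and δ ≥ 0 are such that |a_h(v_h,w) − a(v_h,w)| + |F(w) − F_h(w)| ≤ δ‖w‖ for all w ∈ V_h. Then ‖u − u_h‖ ≤ (1 + M/η)‖u − v_h‖ + δ/η. -/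
/-!
With `w = vh - uh ∈ Vh`, the two variational equations express `ah w w` as the consistency
error tested against `w` minus `a (u - vh) w`. Coercivity of `ah` on `Vh`, continuity of `a` and
the consistency bound then give `η ‖w‖ ≤ M ‖u - vh‖ + δ`, and the triangle inequality for
`u - uh = (u - vh) + w` concludes.
-/

/-- First-Strang-type abstract error estimate: the error of the discrete
solution `uh` of the (possibly inconsistent) discrete problem is bounded by
the best-approximation error plus the consistency error. -/
theorem strang_type_estimate
    {V : Type*} [NormedAddCommGroup V] [InnerProductSpace ℝ V]
    (Vh : Submodule ℝ V)
    (a ah : V →ₗ[ℝ] V →ₗ[ℝ] ℝ)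
    (M : ℝ) (hM : 0 ≤ M) (ha : ∀ u w : V, |a u w| ≤ M * ‖u‖ * ‖w‖)
    (η : ℝ) (hη : 0 < η) (hah : ∀ w ∈ Vh, ah w w ≥ η * ‖w‖ ^ 2)
    (F Fh : V →ₗ[ℝ] ℝ)
    (u : V) (hu : ∀ q : V, a u q = F q)
    (uh : V) (huh : uh ∈ Vh) (huheq : ∀ q ∈ Vh, ah uh q = Fh q)
    (vh : V) (hvh : vh ∈ Vh)
    (δ : ℝ) (hδ : 0 ≤ δ)
    (hcons : ∀ w ∈ Vh, |ah vh w - a vh w| + |F w - Fh w| ≤ δ * ‖w‖) :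
    ‖u - uh‖ ≤ (1 + M / η) * ‖u - vh‖ + δ / η := by
  set w : V := vh - uh with hw
  have hwV : w ∈ Vh := Vh.sub_mem hvh huh
  -- error equation: consistency terms plus `a` applied to the approximation error
  have herr : ah w w = (ah vh w - a vh w) + (F w - Fh w) - a (u - vh) w := by
    have h1 : ah w w = ah vh w - ah uh w := by
      rw [hw, map_sub ah, LinearMap.sub_apply]
    have h2 : a (u - vh) w = a u w - a vh w := by
      rw [map_sub a, LinearMap.sub_apply]
    rw [h1, h2, huheq w hwV, hu w]
    ring
  have hmul : η * ‖w‖ ^ 2 ≤ (M * ‖u - vh‖ + δ) * ‖w‖ := by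
    have h1 := hah w hwV
    have h2 := hcons w hwV
    have h3 := le_abs_self (ah vh w - a vh w)
    have h4 := le_abs_self (F w - Fh w)
    have h5 := (neg_le_abs (a (u - vh) w)).trans (ha (u - vh) w)
    linarith
  have hbound : ‖w‖ ≤ (M * ‖u - vh‖ + δ) / η := by
    rw [le_div_iff₀ hη]
    rcases (norm_nonneg w).eq_or_lt with h0 | hpos
    · rw [← h0, zero_mul]
      positivity
    · refine le_of_mul_le_mul_right ?_ hpos
      linarith
  calc ‖u - uh‖ = ‖(u - vh) + w‖ := by rw [hw, sub_add_sub_cancel]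
    _ ≤ ‖u - vh‖ + ‖w‖ := norm_add_le _ _
    _ ≤ ‖u - vh‖ + (M * ‖u - vh‖ + δ) / η := by gcongr
    _ = (1 + M / η) * ‖u - vh‖ + δ / η := by ring
end
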